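/- Let ρ and σ be density operators on a finite-dimensional complex Hilbert space with supp(ρ) ⊆ supp(σ), and let α ∈ (0,1). Then D_α^𝕄(ρ‖σ) = sup over positive definite operators T with 0 < T ≤ 𝟙 of { (α/(α−1)) log Tr[ρT] − log Tr[σ T^{α/(α−1)}] } (note α/(α−1) < 0, so T^{α/(α−1)} is a negative power of T). -/

import Mathlib

open Matrix
open scoped ComplexOrder Kronecker

noncomputable section

/-- Real power of a Hermitian matrix via functional calculus on its support
(Moore–Penrose convention); junk value `0` for non-Hermitian input. -/
def Matrix.rpowH {ι : Type*} [Fintype ι] [DecidableEq ι] (A : Matrix ι ι ℂ) (p : ℝ) :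
    Matrix ι ι ℂ :=
  if hA : A.IsHermitian then
    (hA.eigenvectorUnitary : Matrix ι ι ℂ) *
      Matrix.diagonal (fun i => ((hA.eigenvalues i ^ p : ℝ) : ℂ)) *
      star (hA.eigenvectorUnitary : Matrix ι ι ℂ)
  else 0

/-- Real part of the trace. -/
def retr {ι : Type*} [Fintype ι] (A : Matrix ι ι ℂ) : ℝ :=
  (Matrix.trace A).re

open scoped Classical in
/-- Classical Rényi divergence of order `α` of two (finitely supported) probability
mass functions, with value `+∞` when `α > 1` and absolute continuity fails. -/
def renyiDivE (α : ℝ) {k : ℕ} (p q : Fin k → ℝ) : EReal :=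
  if α < 1 ∨ ∀ i, q i = 0 → p i = 0 then
    (((α - 1)⁻¹ * Real.log (∑ i, p i ^ α * q i ^ (1 - α)) : ℝ) : EReal)
  else (⊤ : EReal)

/-- Measured Rényi divergence: supremum of classical Rényi divergences of the outcome
distributions over all finite POVMs. -/
def measuredRenyiDiv {ι : Type*} [Fintype ι] [DecidableEq ι]
    (α : ℝ) (ρ σ : Matrix ι ι ℂ) : EReal :=
  ⨆ (k : ℕ) (P : Fin k → Matrix ι ι ℂ) (_ : ∀ i, (P i).PosSemidef) (_ : ∑ i, P i = 1),
    renyiDivE α (fun i => retr (ρ * P i)) (fun i => retr (σ * P i))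

/-!
By the Hölder inequality, for `0 < α < 1` and `β = α / (α - 1)`, the classical Rényi divergence
`(α - 1)⁻¹ log ∑ pᵢ ^ α qᵢ ^ (1 - α)` is the supremum over positive weights `c` of
`β log (∑ cᵢ pᵢ) - log (∑ cᵢ ^ β qᵢ)`, approached at `cᵢ = (qᵢ / pᵢ) ^ (1 - α)`.

Measuring in an eigenbasis of `T`, with the eigenvalues as weights, bounds the operator objective
at `T` by the measured divergence. Conversely, given a POVM `P` and weights `c`, operator Jensen
for `x ↦ x ^ r` with `-1 ≤ r < 0` produces a `T` that does at least as well: `T = ∑ cᵢ Pᵢ` when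
`-1 ≤ β`, and `T = (∑ cᵢ ^ β Pᵢ) ^ β⁻¹` when `β < -1`, where `x ↦ x ^ β` is no longer operator
convex but `x ↦ x ^ β⁻¹` is. Since the objective is invariant under `T ↦ m T`, the constraint
`T ≤ 1` costs nothing. Operator Jensen itself reduces to the case `r = -1`, where the difference
of the two sides is a sum of squares, through `x ^ r ∝ ∫₀^∞ t ^ r (t + x)⁻¹ dt`.
-/

open MeasureTheory Filter Topology
open scoped MatrixOrder

section MeasuredRenyi

variable {ι κ : Type*}

section Trace

variable [Fintype ι]

theorem retr_mul_smul (c : ℝ) (A B : Matrix ι ι ℂ) : retr (A * c • B) = c * retr (A * B) := by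
  simp [retr]

theorem retr_mul_sum_smul [Fintype κ] (A : Matrix ι ι ℂ) (c : κ → ℝ) (B : κ → Matrix ι ι ℂ) :
    retr (A * ∑ i, c i • B i) = ∑ i, c i * retr (A * B i) := by
  simp [retr, Finset.mul_sum, trace_sum]

theorem exists_eq_conjTranspose_mul_self {A : Matrix ι ι ℂ} (hA : A.PosSemidef) :
    ∃ S : Matrix ι ι ℂ, A = Sᴴ * S := by
  classical
  exact CStarAlgebra.nonneg_iff_eq_star_mul_self.mp (nonneg_iff_posSemidef.mpr hA)

theorem trace_conjTranspose_mul_self_mul_mul_conjTranspose (S C : Matrix ι ι ℂ) :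
    (Sᴴ * S * (C * Cᴴ)).trace = ((S * C)ᴴ * (S * C)).trace := by
  rw [← Matrix.mul_assoc, trace_mul_comm, conjTranspose_mul]
  simp only [Matrix.mul_assoc]

theorem trace_mul_nonneg {A B : Matrix ι ι ℂ} (hA : A.PosSemidef) (hB : B.PosSemidef) :
    0 ≤ (A * B).trace := by
  obtain ⟨S, rfl⟩ := exists_eq_conjTranspose_mul_self hA
  obtain ⟨C, rfl⟩ := exists_eq_conjTranspose_mul_self hB
  nth_rw 2 [← conjTranspose_conjTranspose C]
  rw [trace_conjTranspose_mul_self_mul_mul_conjTranspose]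
  exact (posSemidef_conjTranspose_mul_self _).trace_nonneg

theorem trace_mul_eq_zero_iff {A B : Matrix ι ι ℂ} (hA : A.PosSemidef) (hB : B.PosSemidef) :
    (A * B).trace = 0 ↔ A * B = 0 := by
  refine ⟨fun h => ?_, fun h => by rw [h, trace_zero]⟩
  obtain ⟨S, rfl⟩ := exists_eq_conjTranspose_mul_self hA
  obtain ⟨C, rfl⟩ := exists_eq_conjTranspose_mul_self hB
  have hSC : S * Cᴴ = 0 := by
    rw [← trace_conjTranspose_mul_self_eq_zero_iff,
      ← trace_conjTranspose_mul_self_mul_mul_conjTranspose, conjTranspose_conjTranspose, h]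
  calc Sᴴ * S * (Cᴴ * C) = Sᴴ * (S * Cᴴ) * C := by simp only [Matrix.mul_assoc]
    _ = 0 := by rw [hSC, Matrix.mul_zero, Matrix.zero_mul]

theorem retr_mul_nonneg {A B : Matrix ι ι ℂ} (hA : A.PosSemidef) (hB : B.PosSemidef) :
    0 ≤ retr (A * B) :=
  (Complex.nonneg_iff.mp (trace_mul_nonneg hA hB)).1

theorem retr_mul_eq_zero_iff {A B : Matrix ι ι ℂ} (hA : A.PosSemidef) (hB : B.PosSemidef) :
    retr (A * B) = 0 ↔ A * B = 0 := by
  have him := (Complex.nonneg_iff.mp (trace_mul_nonneg hA hB)).2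
  rw [← trace_mul_eq_zero_iff hA hB, Complex.ext_iff]
  simp [retr, ← him]

theorem retr_mul_pos {A T : Matrix ι ι ℂ} (hA : A.PosSemidef) (hA0 : A ≠ 0) (hT : T.PosDef) :
    0 < retr (A * T) := by
  classical
  refine (retr_mul_nonneg hA hT.posSemidef).lt_of_ne' fun h => hA0 ?_
  rwa [retr_mul_eq_zero_iff hA hT.posSemidef, hT.isUnit.mul_left_eq_zero] at h

theorem retr_mul_le_retr_mul {τ A B : Matrix ι ι ℂ} (hτ : τ.PosSemidef) (hAB : A ≤ B) :
    retr (τ * A) ≤ retr (τ * B) := by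
  have h := retr_mul_nonneg hτ (le_iff.mp hAB)
  simpa [retr, Matrix.mul_sub] using h

theorem le_of_forall_retr_mul_le {A B : Matrix ι ι ℂ} (hA : A.IsHermitian) (hB : B.IsHermitian)
    (h : ∀ τ : Matrix ι ι ℂ, τ.PosSemidef → retr (τ * A) ≤ retr (τ * B)) : A ≤ B := by
  have hBA : (B - A).IsHermitian := hB.sub hA
  refine le_iff.mpr (PosSemidef.of_dotProduct_mulVec_nonneg hBA fun x => ?_)
  rw [Complex.nonneg_iff]
  refine ⟨?_, (hBA.im_star_dotProduct_mulVec_self x).symm⟩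
  have hx := h _ (posSemidef_vecMulVec_self_star x)
  simp only [retr, vecMulVec_mul, trace_vecMulVec] at hx
  simp only [sub_mulVec, dotProduct_sub, Complex.sub_re, sub_nonneg]
  simpa only [dotProduct_mulVec, dotProduct_comm x] using hx

theorem mul_ne_zero_of_forall_mulVec_eq_zero {ρ σ : Matrix ι ι ℂ} (hρ : ρ.IsHermitian)
    (hσ : σ.IsHermitian) (hρ0 : ρ ≠ 0)
    (hsupp : ∀ v : ι → ℂ, σ.mulVec v = 0 → ρ.mulVec v = 0) : ρ * σ ≠ 0 := by
  intro h
  have hσρ : σ * ρ = 0 := by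
    rw [← conjTranspose_eq_zero, conjTranspose_mul, hρ.eq, hσ.eq, h]
  have hρρ : ρᴴ * ρ = 0 := by
    rw [hρ.eq]
    ext i j
    exact congrFun (hsupp (ρ.col j) (funext fun i => congrFun (congrFun hσρ i) j)) i
  exact hρ0 (conjTranspose_mul_self_eq_zero.mp hρρ)

end Trace

/-- A finite POVM: positive semidefinite effects that sum to the identity. -/
structure IsPOVM [Fintype κ] [DecidableEq ι] (P : κ → Matrix ι ι ℂ) : Prop where
  posSemidef : ∀ i, (P i).PosSemidef
  sum_eq_one : ∑ i, P i = 1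

namespace IsPOVM

variable [Fintype κ] [DecidableEq ι] {P : κ → Matrix ι ι ℂ} {c d : κ → ℝ}

theorem comp_equiv {κ' : Type*} [Fintype κ'] (hP : IsPOVM P) (e : κ' ≃ κ) :
    IsPOVM fun i => P (e i) :=
  ⟨fun i => hP.posSemidef (e i), (e.sum_comp P).trans hP.sum_eq_one⟩

theorem sum_const_smul (hP : IsPOVM P) (s : ℝ) : ∑ i, s • P i = s • (1 : Matrix ι ι ℂ) := by
  rw [← Finset.smul_sum, hP.sum_eq_one]

theorem sum_smul_le_sum_smul (hP : IsPOVM P) (hcd : ∀ i, c i ≤ d i) :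
    ∑ i, c i • P i ≤ ∑ i, d i • P i := by
  rw [le_iff, ← Finset.sum_sub_distrib]
  refine posSemidef_sum _ fun i _ => ?_
  rw [← sub_smul]
  exact (hP.posSemidef i).smul (sub_nonneg.mpr (hcd i))

theorem posDef_sum_smul [Finite ι] (hP : IsPOVM P) (hc : ∀ i, 0 < c i) :
    (∑ i, c i • P i).PosDef := by
  cases nonempty_fintype ι
  obtain ⟨m, hm, hmc⟩ : ∃ m : ℝ, 0 < m ∧ ∀ i, m ≤ c i := by
    cases isEmpty_or_nonempty κ
    · exact ⟨1, one_pos, isEmptyElim⟩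
    · obtain ⟨i, hi⟩ := Finite.exists_min c
      exact ⟨c i, hc i, hi⟩
  have hle : m • (1 : Matrix ι ι ℂ) ≤ ∑ i, c i • P i :=
    hP.sum_const_smul m ▸ hP.sum_smul_le_sum_smul hmc
  simpa using (PosDef.one.smul hm).add_posSemidef (le_iff.mp hle)

theorem inv_sum_smul_le [Fintype ι] (hP : IsPOVM P) (hc : ∀ i, 0 < c i) :
    (∑ i, c i • P i)⁻¹ ≤ ∑ i, (c i)⁻¹ • P i := by
  have hA := hP.posDef_sum_smul hc
  set A := ∑ i, c i • P i with hA_def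
  have hAinv : A⁻¹ᴴ = A⁻¹ := hA.inv.1
  let X (i : κ) : Matrix ι ι ℂ := (c i)⁻¹ • 1 - A⁻¹
  have hexpand (i : κ) : c i • (X i * P i * (X i)ᴴ) =
      (c i)⁻¹ • P i - A⁻¹ * P i - P i * A⁻¹ + A⁻¹ * (c i • P i) * A⁻¹ := by
    simp only [X, conjTranspose_sub, conjTranspose_smul, hAinv, conjTranspose_one, Matrix.sub_mul,
      Matrix.mul_sub, Matrix.smul_mul, Matrix.mul_smul, Matrix.one_mul, Matrix.mul_one, smul_sub,
      star_trivial, smul_inv_smul₀ (hc i).ne']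
    abel
  have hsquares : ∑ i, (c i)⁻¹ • P i - A⁻¹ = ∑ i, c i • (X i * P i * (X i)ᴴ) := by
    simp only [hexpand, Finset.sum_add_distrib, Finset.sum_sub_distrib, ← Finset.mul_sum,
      ← Finset.sum_mul, hP.sum_eq_one, ← hA_def, Matrix.mul_one, Matrix.one_mul,
      nonsing_inv_mul _ ((isUnit_iff_isUnit_det _).mp hA.isUnit)]
    abel
  rw [le_iff, hsquares]
  exact posSemidef_sum _ fun i _ =>
    ((hP.posSemidef i).mul_mul_conjTranspose_same _).smul (hc i).le

end IsPOVM

section Spectral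

variable [Fintype ι] [DecidableEq ι] {A : Matrix ι ι ℂ}

/-- The rank-one orthogonal projection onto the `j`-th vector of the eigenbasis chosen by
`Matrix.IsHermitian.eigenvectorUnitary`. -/
def eigenProj (hA : A.IsHermitian) (j : ι) : Matrix ι ι ℂ :=
  (hA.eigenvectorUnitary : Matrix ι ι ℂ) * diagonal (Pi.single j 1) *
    star (hA.eigenvectorUnitary : Matrix ι ι ℂ)

theorem sum_smul_eigenProj (hA : A.IsHermitian) (d : ι → ℝ) :
    ∑ j, d j • eigenProj hA j =
      (hA.eigenvectorUnitary : Matrix ι ι ℂ) * diagonal (fun j => (d j : ℂ)) *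
        star (hA.eigenvectorUnitary : Matrix ι ι ℂ) := by
  have hdiag : diagonal (fun j => (d j : ℂ)) = ∑ j, d j • diagonal (Pi.single j (1 : ℂ)) := by
    ext a b
    simp [Matrix.sum_apply, diagonal_apply, Pi.single_apply]
  simp only [hdiag, eigenProj, Finset.mul_sum, Finset.sum_mul, Matrix.mul_smul,
    Matrix.smul_mul]

theorem isPOVM_eigenProj (hA : A.IsHermitian) : IsPOVM (eigenProj hA) where
  posSemidef j := by
    refine PosSemidef.mul_mul_conjTranspose_same (PosSemidef.diagonal ?_) _
    exact Pi.single_nonneg.mpr zero_le_one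
  sum_eq_one := by simpa using sum_smul_eigenProj hA fun _ => 1

theorem inv_sum_smul_eigenProj (hA : A.IsHermitian) {d : ι → ℝ} (hd : ∀ j, d j ≠ 0) :
    (∑ j, d j • eigenProj hA j)⁻¹ = ∑ j, (d j)⁻¹ • eigenProj hA j := by
  refine inv_eq_right_inv ?_
  have hdd : diagonal (fun j => (d j : ℂ)) * diagonal (fun j => (((d j)⁻¹ : ℝ) : ℂ)) = 1 := by
    simp [diagonal_mul_diagonal, hd]
  have hU := Unitary.coe_star_mul_self hA.eigenvectorUnitary
  have hU' := Unitary.coe_mul_star_self hA.eigenvectorUnitary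
  rw [Unitary.coe_star] at hU'
  rw [sum_smul_eigenProj, sum_smul_eigenProj]
  generalize (hA.eigenvectorUnitary : Matrix ι ι ℂ) = U at hU hU' ⊢
  generalize diagonal (fun j => (d j : ℂ)) = D at hdd ⊢
  generalize diagonal (fun j => (((d j)⁻¹ : ℝ) : ℂ)) = D' at hdd ⊢
  calc U * D * star U * (U * D' * star U) = U * (D * (star U * U) * D') * star U := by
        simp only [Matrix.mul_assoc]
    _ = 1 := by rw [hU, Matrix.mul_one, hdd, Matrix.mul_one, hU']

theorem sum_eigenvalues_smul_eigenProj (hA : A.IsHermitian) :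
    ∑ j, hA.eigenvalues j • eigenProj hA j = A := by
  rw [sum_smul_eigenProj]
  exact hA.spectral_theorem.symm

theorem rpowH_eq_sum_smul_eigenProj (hA : A.IsHermitian) (p : ℝ) :
    A.rpowH p = ∑ j, hA.eigenvalues j ^ p • eigenProj hA j := by
  rw [sum_smul_eigenProj, rpowH, dif_pos hA]

theorem rpowH_eq_cfc (hA : A.IsHermitian) (p : ℝ) : A.rpowH p = cfc (fun x : ℝ => x ^ p) A := by
  rw [hA.cfc_eq, rpowH, dif_pos hA]
  rfl

theorem rpowH_eq_rpow (hA : A.PosSemidef) (p : ℝ) : A.rpowH p = A ^ p := by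
  rw [rpowH_eq_cfc hA.1, CFC.rpow_eq_cfc_real (nonneg_iff_posSemidef.mpr hA)]

theorem posDef_rpowH (hA : A.PosDef) (p : ℝ) : (A.rpowH p).PosDef := by
  rw [rpowH_eq_rpow hA.posSemidef, ← isStrictlyPositive_iff_posDef]
  exact IsStrictlyPositive.rpow A p (isStrictlyPositive_iff_posDef.mpr hA)

theorem rpowH_inv_rpowH (hA : A.PosDef) {p : ℝ} (hp : p ≠ 0) : (A.rpowH p⁻¹).rpowH p = A := by
  rw [rpowH_eq_rpow (posDef_rpowH hA _).posSemidef, rpowH_eq_rpow hA.posSemidef,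
    CFC.rpow_inv_rpow A p hp (isStrictlyPositive_iff_posDef.mpr hA)]

theorem rpowH_smul (hA : A.PosSemidef) {m : ℝ} (hm : 0 ≤ m) (p : ℝ) :
    (m • A).rpowH p = m ^ p • A.rpowH p := by
  have hfin : (spectrum ℝ A).Finite := finite_real_spectrum
  have hscale : cfc (fun x : ℝ => x ^ p) (m • A) = cfc (fun x : ℝ => (m * x) ^ p) A :=
    (cfc_comp_const_mul m (fun x : ℝ => x ^ p) A ((hfin.image _).continuousOn _) hA.1).symm
  rw [rpowH_eq_cfc (hA.smul hm).1, rpowH_eq_cfc hA.1, hscale,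
    ← cfc_const_mul (m ^ p) _ A (hfin.continuousOn _)]
  refine cfc_congr fun x hx => Real.mul_rpow hm ?_
  exact spectrum_nonneg_of_nonneg (nonneg_iff_posSemidef.mpr hA) hx

end Spectral

theorem exists_pos_smul_le_one [Finite ι] [DecidableEq ι] {A : Matrix ι ι ℂ}
    (hA : A.IsHermitian) :
    ∃ m : ℝ, 0 < m ∧ m • A ≤ (1 : Matrix ι ι ℂ) := by
  cases nonempty_fintype ι
  obtain ⟨M, hM⟩ := (Set.finite_range hA.eigenvalues).bddAbove
  have hM0 : 0 < max M 1 := lt_max_of_lt_right one_pos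
  refine ⟨(max M 1)⁻¹, inv_pos.mpr hM0, ?_⟩
  have hle : ∀ j, (max M 1)⁻¹ * hA.eigenvalues j ≤ 1 := fun j =>
    (inv_mul_le_one₀ hM0).mpr ((hM ⟨j, rfl⟩).trans (le_max_left _ _))
  calc (max M 1)⁻¹ • A = ∑ j, ((max M 1)⁻¹ * hA.eigenvalues j) • eigenProj hA j := by
        conv_lhs => rw [← sum_eigenvalues_smul_eigenProj hA]
        simp only [Finset.smul_sum, smul_smul]
    _ ≤ ∑ j, (1 : ℝ) • eigenProj hA j := (isPOVM_eigenProj hA).sum_smul_le_sum_smul hle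
    _ = 1 := by rw [(isPOVM_eigenProj hA).sum_const_smul, one_smul]

section ResolventIntegral

variable {r : ℝ}

theorem eqOn_inv_mul_rpowIntegrand₀₁ (hr : r ∈ Set.Ioo (-1) 0) {x : ℝ} (hx : 0 < x) :
    Set.EqOn (fun t => x⁻¹ * Real.rpowIntegrand₀₁ (r + 1) t x) (fun t => t ^ r * (t + x)⁻¹)
      (Set.Ioi 0) := by
  intro t (ht : 0 < t)
  have hr' : r + 1 ∈ Set.Ioo 0 1 := ⟨by linarith [hr.1], by linarith [hr.2]⟩
  simp only [Real.rpowIntegrand₀₁_eq_pow_div hr' ht.le hx.le, add_sub_cancel_right]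
  field_simp

theorem integrableOn_rpow_mul_inv_add (hr : r ∈ Set.Ioo (-1) 0) {x : ℝ} (hx : 0 < x) :
    IntegrableOn (fun t : ℝ => t ^ r * (t + x)⁻¹) (Set.Ioi 0) := by
  have hr' : r + 1 ∈ Set.Ioo 0 1 := ⟨by linarith [hr.1], by linarith [hr.2]⟩
  exact IntegrableOn.congr_fun ((Real.integrableOn_rpowIntegrand₀₁_Ioi hr' hx.le).const_mul x⁻¹)
    (eqOn_inv_mul_rpowIntegrand₀₁ hr hx) measurableSet_Ioi

theorem integral_rpow_mul_inv_add (hr : r ∈ Set.Ioo (-1) 0) {x : ℝ} (hx : 0 < x) :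
    ∫ t in Set.Ioi (0 : ℝ), t ^ r * (t + x)⁻¹ =
      x ^ r * ∫ t in Set.Ioi (0 : ℝ), Real.rpowIntegrand₀₁ (r + 1) t 1 := by
  have hr' : r + 1 ∈ Set.Ioo 0 1 := ⟨by linarith [hr.1], by linarith [hr.2]⟩
  rw [← setIntegral_congr_fun measurableSet_Ioi (eqOn_inv_mul_rpowIntegrand₀₁ hr hx),
    integral_const_mul, Real.integral_rpowIntegrand₀₁_eq_rpow_mul_const hr' hx.le,
    Real.rpow_add_one hx.ne']
  field_simp

theorem sum_mul_rpow_nonneg_of_sum_mul_inv_add_nonneg [Fintype κ] {a x : κ → ℝ}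
    (hx : ∀ j, 0 < x j) (h : ∀ s, 0 ≤ s → 0 ≤ ∑ j, a j * (s + x j)⁻¹) (hr : r ∈ Set.Ico (-1) 0) :
    0 ≤ ∑ j, a j * x j ^ r := by
  rcases hr.1.eq_or_lt with rfl | hr1
  · simpa [Real.rpow_neg_one] using h 0 le_rfl
  have hr' : r ∈ Set.Ioo (-1) 0 := ⟨hr1, hr.2⟩
  have hK := Real.integral_rpowIntegrand₀₁_one_pos (p := r + 1)
    ⟨by linarith, by linarith [hr.2]⟩
  refine nonneg_of_mul_nonneg_left (b := ∫ t in Set.Ioi (0 : ℝ), _) ?_ hK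
  calc (0 : ℝ) ≤ ∫ t in Set.Ioi (0 : ℝ), t ^ r * ∑ j, a j * (t + x j)⁻¹ :=
        setIntegral_nonneg measurableSet_Ioi fun t ht =>
          mul_nonneg (Real.rpow_nonneg (le_of_lt ht) r) (h t (le_of_lt ht))
    _ = ∑ j, ∫ t in Set.Ioi (0 : ℝ), a j * (t ^ r * (t + x j)⁻¹) := by
        rw [← integral_finsetSum _ fun j _ =>
          (integrableOn_rpow_mul_inv_add hr' (hx j)).const_mul (a j)]
        simp only [Finset.mul_sum, mul_left_comm]
    _ = (∑ j, a j * x j ^ r) * ∫ t in Set.Ioi (0 : ℝ), Real.rpowIntegrand₀₁ (r + 1) t 1 := by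
        simp only [integral_const_mul, integral_rpow_mul_inv_add hr' (hx _), Finset.sum_mul,
          mul_assoc]

theorem sum_mul_rpow_le_of_sum_mul_inv_add_le {κ' : Type*} [Fintype κ] [Fintype κ']
    {a x : κ → ℝ} {b y : κ' → ℝ} (hx : ∀ j, 0 < x j) (hy : ∀ i, 0 < y i)
    (h : ∀ s, 0 ≤ s → ∑ j, a j * (s + x j)⁻¹ ≤ ∑ i, b i * (s + y i)⁻¹)
    (hr : r ∈ Set.Ico (-1) 0) : ∑ j, a j * x j ^ r ≤ ∑ i, b i * y i ^ r := by
  have hdiff := sum_mul_rpow_nonneg_of_sum_mul_inv_add_nonneg (a := Sum.elim (-a) b)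
    (x := Sum.elim x y) (Sum.forall.mpr ⟨hx, hy⟩) (fun s hs => by simpa using h s hs) hr
  simpa using hdiff

end ResolventIntegral

namespace IsPOVM

variable [Fintype ι] [Fintype κ] [DecidableEq ι] {P : κ → Matrix ι ι ℂ} {c : κ → ℝ}

theorem rpowH_sum_smul_le (hP : IsPOVM P) (hc : ∀ i, 0 < c i) {r : ℝ} (hr : r ∈ Set.Ico (-1) 0) :
    (∑ i, c i • P i).rpowH r ≤ ∑ i, c i ^ r • P i := by
  have hA := hP.posDef_sum_smul hc
  set A := ∑ i, c i • P i with hA_def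
  have hresolvent (s : ℝ) (hs : 0 ≤ s) :
      ∑ j, (s + hA.1.eigenvalues j)⁻¹ • eigenProj hA.1 j ≤ ∑ i, (s + c i)⁻¹ • P i := by
    have hshift :
        ∑ i, (s + c i) • P i = ∑ j, (s + hA.1.eigenvalues j) • eigenProj hA.1 j := by
      simp only [add_smul, Finset.sum_add_distrib, hP.sum_const_smul,
        (isPOVM_eigenProj hA.1).sum_const_smul, sum_eigenvalues_smul_eigenProj, hA_def]
    have hne (j : ι) : s + hA.1.eigenvalues j ≠ 0 :=
      (add_pos_of_nonneg_of_pos hs (hA.eigenvalues_pos j)).ne'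
    rw [← inv_sum_smul_eigenProj hA.1 hne, ← hshift]
    exact hP.inv_sum_smul_le fun i => add_pos_of_nonneg_of_pos hs (hc i)
  refine le_of_forall_retr_mul_le (posDef_rpowH hA r).1
    (hP.posDef_sum_smul fun i => Real.rpow_pos_of_pos (hc i) r).1 fun τ hτ => ?_
  rw [rpowH_eq_sum_smul_eigenProj hA.1, retr_mul_sum_smul, retr_mul_sum_smul]
  simp only [mul_comm _ (retr _)]
  refine sum_mul_rpow_le_of_sum_mul_inv_add_le hA.eigenvalues_pos hc (fun s hs => ?_) hr
  have h := retr_mul_le_retr_mul hτ (hresolvent s hs)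
  simpa only [retr_mul_sum_smul, mul_comm _ (retr _)] using h

theorem exists_posDef_le (hP : IsPOVM P) (hc : ∀ i, 0 < c i) {β : ℝ} (hβ : β < 0) :
    ∃ T : Matrix ι ι ℂ, T.PosDef ∧ T ≤ ∑ i, c i • P i ∧ T.rpowH β ≤ ∑ i, c i ^ β • P i := by
  rcases le_or_gt (-1) β with hβ1 | hβ1
  · exact ⟨_, hP.posDef_sum_smul hc, le_rfl, hP.rpowH_sum_smul_le hc ⟨hβ1, hβ⟩⟩
  · have hcβ (i : κ) : 0 < c i ^ β := Real.rpow_pos_of_pos (hc i) β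
    have hW := hP.posDef_sum_smul hcβ
    refine ⟨_, posDef_rpowH hW β⁻¹, ?_, (rpowH_inv_rpowH hW hβ.ne).le⟩
    have hβinv : β⁻¹ ∈ Set.Ico (-1) 0 :=
      ⟨(le_inv_of_neg neg_one_lt_zero hβ).mpr (by simpa using hβ1.le), inv_lt_zero.mpr hβ⟩
    simpa only [Real.rpow_rpow_inv (hc _).le hβ.ne] using hP.rpowH_sum_smul_le hcβ hβinv

end IsPOVM

section Classical

variable [Fintype κ] {α : ℝ} {p q c : κ → ℝ}

/-- The Chernoff `α`-coefficient `∑ i, p i ^ α * q i ^ (1 - α)`, whose logarithm divided by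
`α - 1` is the classical Rényi divergence for `α < 1`. -/
def chernoffCoeff (α : ℝ) (p q : κ → ℝ) : ℝ :=
  ∑ i, p i ^ α * q i ^ (1 - α)

/-- The objective of the variational formula for commuting operators: `p` and `q` are the
distributions of the two states and `c` is the spectrum of the test operator. -/
def classicalRenyiObjective (α : ℝ) (p q c : κ → ℝ) : ℝ :=
  α / (α - 1) * Real.log (∑ i, c i * p i) - Real.log (∑ i, c i ^ (α / (α - 1)) * q i)

theorem chernoffCoeff_le_rpow_sum_mul_rpow_sum (hp : ∀ i, 0 ≤ p i) (hq : ∀ i, 0 ≤ q i)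
    (hα0 : 0 < α) (hα1 : α < 1) :
    chernoffCoeff α p q ≤ (∑ i, p i) ^ α * (∑ i, q i) ^ (1 - α) := by
  have hconj : Real.HolderConjugate α⁻¹ (1 - α)⁻¹ :=
    Real.holderConjugate_iff.mpr ⟨(one_lt_inv₀ hα0).mpr hα1, by simp⟩
  have hHolder := Real.inner_le_Lp_mul_Lq_of_nonneg Finset.univ hconj
    (f := fun i => p i ^ α) (g := fun i => q i ^ (1 - α))
    (fun i _ => Real.rpow_nonneg (hp i) _) (fun i _ => Real.rpow_nonneg (hq i) _)
  simpa only [chernoffCoeff, Real.rpow_rpow_inv (hp _) hα0.ne',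
    Real.rpow_rpow_inv (hq _) (sub_pos.mpr hα1).ne', one_div, inv_inv] using hHolder

theorem chernoffCoeff_mul_rpow_mul (hp : ∀ i, 0 ≤ p i) (hq : ∀ i, 0 ≤ q i) (hc : ∀ i, 0 < c i)
    (hα : α ≠ 1) :
    chernoffCoeff α (fun i => c i * p i) (fun i => c i ^ (α / (α - 1)) * q i) =
      chernoffCoeff α p q := by
  have hα' : α - 1 ≠ 0 := sub_ne_zero.mpr hα
  refine Finset.sum_congr rfl fun i _ => ?_
  have hexp : α + α / (α - 1) * (1 - α) = 0 := by
    field_simp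
    ring
  have hcancel : c i ^ α * c i ^ (α / (α - 1) * (1 - α)) = 1 := by
    rw [← Real.rpow_add (hc i), hexp, Real.rpow_zero]
  rw [Real.mul_rpow (hc i).le (hp i), Real.mul_rpow (Real.rpow_nonneg (hc i).le _) (hq i),
    ← Real.rpow_mul (hc i).le, mul_mul_mul_comm, hcancel, one_mul]

theorem classicalRenyiObjective_le (hp : ∀ i, 0 ≤ p i) (hq : ∀ i, 0 ≤ q i) (hc : ∀ i, 0 < c i)
    (hα0 : 0 < α) (hα1 : α < 1) (hpq : 0 < chernoffCoeff α p q) :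
    classicalRenyiObjective α p q c ≤ (α - 1)⁻¹ * Real.log (chernoffCoeff α p q) := by
  have hcp (i : κ) : 0 ≤ c i * p i := mul_nonneg (hc i).le (hp i)
  have hcq (i : κ) : 0 ≤ c i ^ (α / (α - 1)) * q i :=
    mul_nonneg (Real.rpow_nonneg (hc i).le _) (hq i)
  have hHolder := chernoffCoeff_le_rpow_sum_mul_rpow_sum hcp hcq hα0 hα1
  rw [chernoffCoeff_mul_rpow_mul hp hq hc hα1.ne] at hHolder
  rw [classicalRenyiObjective]
  set X := ∑ i, c i * p i
  set Y := ∑ i, c i ^ (α / (α - 1)) * q i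
  have hX : 0 < X := (Finset.sum_nonneg fun i _ => hcp i).lt_of_ne' fun (h : X = 0) => by
    rw [h, Real.zero_rpow hα0.ne', zero_mul] at hHolder
    exact hpq.not_ge hHolder
  have hY : 0 < Y := (Finset.sum_nonneg fun i _ => hcq i).lt_of_ne' fun (h : Y = 0) => by
    rw [h, Real.zero_rpow (sub_pos.mpr hα1).ne', mul_zero] at hHolder
    exact hpq.not_ge hHolder
  have hlog : Real.log (chernoffCoeff α p q) ≤ α * Real.log X + (1 - α) * Real.log Y := by
    rw [← Real.log_rpow hX, ← Real.log_rpow hY, ← Real.log_mul (by positivity) (by positivity)]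
    exact Real.log_le_log hpq hHolder
  have hα' : α - 1 < 0 := sub_neg.mpr hα1
  calc α / (α - 1) * Real.log X - Real.log Y
      = (α - 1)⁻¹ * (α * Real.log X + (1 - α) * Real.log Y) := by
        field_simp [hα'.ne]
        ring
    _ ≤ (α - 1)⁻¹ * Real.log (chernoffCoeff α p q) :=
        mul_le_mul_of_nonpos_left hlog (inv_nonpos.mpr hα'.le)

theorem tendsto_div_add_rpow_mul {x y s : ℝ} (hx : 0 ≤ x) (hy : 0 ≤ y) (hs : s ∈ Set.Ioo 0 1) :
    Tendsto (fun ε => ((y + ε) / (x + ε)) ^ s * x) (𝓝[>] 0) (𝓝 (x ^ (1 - s) * y ^ s)) := by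
  rcases hx.eq_or_lt with rfl | hx
  · simp [Real.zero_rpow (sub_pos.mpr hs.2).ne']
  have hval : ((y + 0) / (x + 0)) ^ s * x = x ^ (1 - s) * y ^ s := by
    rw [add_zero, add_zero, Real.div_rpow hy hx.le, Real.rpow_sub hx, Real.rpow_one]
    ring
  have hcont : ContinuousAt (fun ε => ((y + ε) / (x + ε)) ^ s * x) 0 := by
    refine ContinuousAt.mul (ContinuousAt.rpow_const (ContinuousAt.div ?_ ?_ ?_) (Or.inr hs.1.le))
      continuousAt_const
    · fun_prop
    · fun_prop
    · simpa using hx.ne'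
  exact hval ▸ hcont.tendsto.mono_left nhdsWithin_le_nhds

theorem div_rpow_one_sub_rpow {x y : ℝ} (hx : 0 ≤ x) (hy : 0 ≤ y) (hα : α ≠ 1) :
    ((y / x) ^ (1 - α)) ^ (α / (α - 1)) = (x / y) ^ α := by
  have hα' : α - 1 ≠ 0 := sub_ne_zero.mpr hα
  have hexp : (1 - α) * (α / (α - 1)) = -α := by
    field_simp
    ring
  rw [← Real.rpow_mul (div_nonneg hy hx), hexp, Real.rpow_neg_eq_inv_rpow, inv_div]

theorem tendsto_classicalRenyiObjective (hp : ∀ i, 0 ≤ p i) (hq : ∀ i, 0 ≤ q i)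
    (hα0 : 0 < α) (hα1 : α < 1) (hpq : 0 < chernoffCoeff α p q) :
    Tendsto
      (fun ε => classicalRenyiObjective α p q fun i => ((q i + ε) / (p i + ε)) ^ (1 - α))
      (𝓝[>] 0) (𝓝 ((α - 1)⁻¹ * Real.log (chernoffCoeff α p q))) := by
  -- Both sums tend to `chernoffCoeff α p q`, since the weights `(q i / p i) ^ (1 - α)` would give
  -- equality in the Hölder inequality; `ε` keeps them finite and positive.
  have hX : Tendsto (fun ε => ∑ i, ((q i + ε) / (p i + ε)) ^ (1 - α) * p i) (𝓝[>] 0)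
      (𝓝 (chernoffCoeff α p q)) := by
    refine tendsto_finsetSum _ fun i _ => ?_
    simpa only [sub_sub_cancel] using
      tendsto_div_add_rpow_mul (hp i) (hq i) (s := 1 - α) ⟨by linarith, by linarith⟩
  have hY : Tendsto
      (fun ε => ∑ i, (((q i + ε) / (p i + ε)) ^ (1 - α)) ^ (α / (α - 1)) * q i) (𝓝[>] 0)
      (𝓝 (chernoffCoeff α p q)) := by
    refine tendsto_finsetSum _ fun i _ => ?_
    rw [mul_comm]
    refine (tendsto_div_add_rpow_mul (hq i) (hp i) ⟨hα0, hα1⟩).congr' ?_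
    filter_upwards [self_mem_nhdsWithin] with ε (hε : 0 < ε)
    rw [div_rpow_one_sub_rpow (add_nonneg (hp i) hε.le) (add_nonneg (hq i) hε.le) hα1.ne]
  have hα' : α - 1 ≠ 0 := sub_ne_zero.mpr hα1.ne
  have hval : (α - 1)⁻¹ * Real.log (chernoffCoeff α p q) =
      α / (α - 1) * Real.log (chernoffCoeff α p q) - Real.log (chernoffCoeff α p q) := by
    field_simp
    ring
  rw [hval]
  exact ((hX.log hpq.ne').const_mul _).sub (hY.log hpq.ne')

end Classical

section Measured

variable [Fintype ι] {α : ℝ} {ρ σ : Matrix ι ι ℂ}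

/-- The outcome distribution `i ↦ Tr[ρ P i]` of measuring `P` in the state `ρ`. -/
def outcomeDist (ρ : Matrix ι ι ℂ) (P : κ → Matrix ι ι ℂ) (i : κ) : ℝ :=
  retr (ρ * P i)

variable [DecidableEq ι]

/-- The objective `(α / (α - 1)) log Tr[ρ T] - log Tr[σ T ^ (α / (α - 1))]` of the variational
formula at the test operator `T`. -/
def renyiObjective (α : ℝ) (ρ σ T : Matrix ι ι ℂ) : ℝ :=
  α / (α - 1) * Real.log (retr (ρ * T)) - Real.log (retr (σ * T.rpowH (α / (α - 1))))

theorem renyiObjective_eq_classicalRenyiObjective {T : Matrix ι ι ℂ} (hT : T.IsHermitian) :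
    renyiObjective α ρ σ T = classicalRenyiObjective α (outcomeDist ρ (eigenProj hT))
      (outcomeDist σ (eigenProj hT)) hT.eigenvalues := by
  rw [renyiObjective, rpowH_eq_sum_smul_eigenProj hT, retr_mul_sum_smul]
  nth_rw 1 [← sum_eigenvalues_smul_eigenProj hT]
  rw [retr_mul_sum_smul]
  rfl

theorem renyiObjective_smul (hρ : ρ.PosSemidef) (hσ : σ.PosSemidef) (hρ0 : ρ ≠ 0) (hσ0 : σ ≠ 0)
    {T : Matrix ι ι ℂ} (hT : T.PosDef) {m : ℝ} (hm : 0 < m) :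
    renyiObjective α ρ σ (m • T) = renyiObjective α ρ σ T := by
  have hρT := retr_mul_pos hρ hρ0 hT
  have hσT := retr_mul_pos hσ hσ0 (posDef_rpowH hT (α / (α - 1)))
  rw [renyiObjective, renyiObjective, rpowH_smul hT.posSemidef hm.le, retr_mul_smul,
    retr_mul_smul, Real.log_mul hm.ne' hρT.ne',
    Real.log_mul (Real.rpow_pos_of_pos hm _).ne' hσT.ne', Real.log_rpow hm]
  ring

theorem renyiObjective_le_iSup (hρ : ρ.PosSemidef) (hσ : σ.PosSemidef) (hρ0 : ρ ≠ 0)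
    (hσ0 : σ ≠ 0) {T : Matrix ι ι ℂ} (hT : T.PosDef) :
    (renyiObjective α ρ σ T : EReal) ≤
      ⨆ (T : Matrix ι ι ℂ) (_ : T.PosDef ∧ (1 - T).PosSemidef),
        (renyiObjective α ρ σ T : EReal) := by
  obtain ⟨m, hm, hmT⟩ := exists_pos_smul_le_one hT.1
  rw [← renyiObjective_smul hρ hσ hρ0 hσ0 hT hm]
  exact le_iSup₂_of_le (m • T) ⟨hT.smul hm, hmT⟩ le_rfl

namespace IsPOVM

variable [Fintype κ] {P : κ → Matrix ι ι ℂ} {c : κ → ℝ}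

theorem exists_classicalRenyiObjective_le (hP : IsPOVM P) (hc : ∀ i, 0 < c i)
    (hρ : ρ.PosSemidef) (hσ : σ.PosSemidef) (hρ0 : ρ ≠ 0) (hσ0 : σ ≠ 0)
    (hα0 : 0 < α) (hα1 : α < 1) :
    ∃ T : Matrix ι ι ℂ, T.PosDef ∧
      classicalRenyiObjective α (outcomeDist ρ P) (outcomeDist σ P) c ≤ renyiObjective α ρ σ T := by
  have hβ : α / (α - 1) < 0 := div_neg_of_pos_of_neg hα0 (sub_neg.mpr hα1)
  obtain ⟨T, hT, hTc, hTβ⟩ := hP.exists_posDef_le hc hβ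
  have hρT := retr_mul_le_retr_mul hρ hTc
  have hσT := retr_mul_le_retr_mul hσ hTβ
  rw [retr_mul_sum_smul] at hρT hσT
  refine ⟨T, hT, sub_le_sub ?_ ?_⟩
  · exact mul_le_mul_of_nonpos_left (Real.log_le_log (retr_mul_pos hρ hρ0 hT) hρT) hβ.le
  · exact Real.log_le_log (retr_mul_pos hσ hσ0 (posDef_rpowH hT _)) hσT

theorem outcomeDist_nonneg (hP : IsPOVM P) (hρ : ρ.PosSemidef) (i : κ) : 0 ≤ outcomeDist ρ P i :=
  retr_mul_nonneg hρ (hP.posSemidef i)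

theorem chernoffCoeff_outcomeDist_pos (hP : IsPOVM P) (hρ : ρ.PosSemidef) (hσ : σ.PosSemidef)
    (hρσ : ρ * σ ≠ 0) : 0 < chernoffCoeff α (outcomeDist ρ P) (outcomeDist σ P) := by
  obtain ⟨i, -, hi⟩ : ∃ i ∈ Finset.univ, ρ * P i * σ ≠ 0 := by
    refine Finset.exists_ne_zero_of_sum_ne_zero ?_
    rwa [← Finset.sum_mul, ← Finset.mul_sum, hP.sum_eq_one, Matrix.mul_one]
  have hρi : 0 < outcomeDist ρ P i := (hP.outcomeDist_nonneg hρ i).lt_of_ne' fun h => hi <| by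
    rw [(retr_mul_eq_zero_iff hρ (hP.posSemidef i)).mp h, Matrix.zero_mul]
  have hσi : 0 < outcomeDist σ P i := (hP.outcomeDist_nonneg hσ i).lt_of_ne' fun h => hi <| by
    have hσP := (retr_mul_eq_zero_iff hσ (hP.posSemidef i)).mp h
    have hPσ : P i * σ = 0 := by
      rw [← conjTranspose_eq_zero, conjTranspose_mul, hσ.1, (hP.posSemidef i).1, hσP]
    rw [Matrix.mul_assoc, hPσ, Matrix.mul_zero]
  refine Finset.sum_pos' (fun j _ => mul_nonneg (Real.rpow_nonneg (hP.outcomeDist_nonneg hρ j) _)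
    (Real.rpow_nonneg (hP.outcomeDist_nonneg hσ j) _)) ⟨i, Finset.mem_univ i, ?_⟩
  exact mul_pos (Real.rpow_pos_of_pos hρi _) (Real.rpow_pos_of_pos hσi _)

end IsPOVM

theorem measuredRenyiDiv_le_iff (hα : α < 1) {b : EReal} :
    measuredRenyiDiv α ρ σ ≤ b ↔ ∀ (k : ℕ) (P : Fin k → Matrix ι ι ℂ), IsPOVM P →
      (((α - 1)⁻¹ * Real.log (chernoffCoeff α (outcomeDist ρ P) (outcomeDist σ P)) : ℝ) : EReal)
        ≤ b := by
  simp only [measuredRenyiDiv, renyiDivE, if_pos (Or.inl hα), iSup_le_iff]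
  exact forall₂_congr fun k P => ⟨fun h hP => h hP.1 hP.2, fun h hP hP1 => h ⟨hP, hP1⟩⟩

theorem IsPOVM.le_measuredRenyiDiv [Fintype κ] {P : κ → Matrix ι ι ℂ} (hP : IsPOVM P)
    (hα : α < 1) :
    (((α - 1)⁻¹ * Real.log (chernoffCoeff α (outcomeDist ρ P) (outcomeDist σ P)) : ℝ) : EReal) ≤
      measuredRenyiDiv α ρ σ := by
  let e := (Fintype.equivFin κ).symm
  have hreindex : chernoffCoeff α (outcomeDist ρ P) (outcomeDist σ P) =
      chernoffCoeff α (outcomeDist ρ fun i => P (e i)) (outcomeDist σ fun i => P (e i)) :=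
    (e.sum_comp fun i => outcomeDist ρ P i ^ α * outcomeDist σ P i ^ (1 - α)).symm
  rw [hreindex]
  exact (measuredRenyiDiv_le_iff hα).mp le_rfl _ _ (hP.comp_equiv e)

theorem measuredRenyiDiv_le_iSup_renyiObjective (hρ : ρ.PosSemidef) (hσ : σ.PosSemidef)
    (hρσ : ρ * σ ≠ 0) (hα0 : 0 < α) (hα1 : α < 1) :
    measuredRenyiDiv α ρ σ ≤
      ⨆ (T : Matrix ι ι ℂ) (_ : T.PosDef ∧ (1 - T).PosSemidef),
        (renyiObjective α ρ σ T : EReal) := by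
  refine (measuredRenyiDiv_le_iff hα1).mpr fun k P hP => ?_
  have hp := hP.outcomeDist_nonneg hρ
  have hq := hP.outcomeDist_nonneg hσ
  have hlim := tendsto_classicalRenyiObjective hp hq hα0 hα1
    (hP.chernoffCoeff_outcomeDist_pos hρ hσ hρσ)
  refine le_of_tendsto ((continuous_coe_real_ereal.tendsto _).comp hlim) ?_
  filter_upwards [self_mem_nhdsWithin] with ε (hε : 0 < ε)
  have hρ0 : ρ ≠ 0 := left_ne_zero_of_mul hρσ
  have hσ0 : σ ≠ 0 := right_ne_zero_of_mul hρσ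
  have hc (i : Fin k) :
      0 < ((outcomeDist σ P i + ε) / (outcomeDist ρ P i + ε)) ^ (1 - α) :=
    Real.rpow_pos_of_pos
      (div_pos (add_pos_of_nonneg_of_pos (hq i) hε) (add_pos_of_nonneg_of_pos (hp i) hε)) _
  obtain ⟨T, hT, hle⟩ := hP.exists_classicalRenyiObjective_le hc hρ hσ hρ0 hσ0 hα0 hα1
  exact (EReal.coe_le_coe_iff.mpr hle).trans (renyiObjective_le_iSup hρ hσ hρ0 hσ0 hT)

theorem renyiObjective_le_measuredRenyiDiv (hρ : ρ.PosSemidef) (hσ : σ.PosSemidef)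
    (hρσ : ρ * σ ≠ 0) (hα0 : 0 < α) (hα1 : α < 1) {T : Matrix ι ι ℂ} (hT : T.PosDef) :
    (renyiObjective α ρ σ T : EReal) ≤ measuredRenyiDiv α ρ σ := by
  have hE := isPOVM_eigenProj hT.1
  have hle := classicalRenyiObjective_le (hE.outcomeDist_nonneg hρ) (hE.outcomeDist_nonneg hσ)
    hT.eigenvalues_pos hα0 hα1 (hE.chernoffCoeff_outcomeDist_pos hρ hσ hρσ)
  rw [← renyiObjective_eq_classicalRenyiObjective hT.1] at hle
  exact (EReal.coe_le_coe_iff.mpr hle).trans (hE.le_measuredRenyiDiv hα1)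

end Measured

theorem measured_renyi_variational_lt_one_general [Fintype ι] [DecidableEq ι] {ρ σ : Matrix ι ι ℂ}
    (hρ : ρ.PosSemidef) (hσ : σ.PosSemidef) (hρσ : ρ * σ ≠ 0)
    {α : ℝ} (hα0 : 0 < α) (hα1 : α < 1) :
    measuredRenyiDiv α ρ σ =
      ⨆ (T : Matrix ι ι ℂ) (_ : T.PosDef ∧ (1 - T).PosSemidef),
        (renyiObjective α ρ σ T : EReal) :=
  (measuredRenyiDiv_le_iSup_renyiObjective hρ hσ hρσ hα0 hα1).antisymm <|
    iSup₂_le fun _ hT => renyiObjective_le_measuredRenyiDiv hρ hσ hρσ hα0 hα1 hT.1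

end MeasuredRenyi

/-- variational expression for the measured Rényi divergence, `α ∈ (0,1)`.
`D_α^𝕄(ρ‖σ) = sup { (α/(α-1)) log Tr[ρT] - log Tr[σ T^{α/(α-1)}] : 0 < T ≤ 𝟙 }`,
where `T^{α/(α-1)}` is a negative power of the positive definite `T`. -/
theorem measured_renyi_variational_lt_one
    {ι : Type*} [Fintype ι] [DecidableEq ι]
    (ρ σ : Matrix ι ι ℂ)
    (hρ : ρ.PosSemidef) (hρtr : ρ.trace = 1)
    (hσ : σ.PosSemidef) (hσtr : σ.trace = 1)
    (hsupp : ∀ v : ι → ℂ, σ.mulVec v = 0 → ρ.mulVec v = 0)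
    (α : ℝ) (hα0 : 0 < α) (hα1 : α < 1) :
    measuredRenyiDiv α ρ σ =
      ⨆ (T : Matrix ι ι ℂ) (_ : T.PosDef ∧ (1 - T).PosSemidef),
        ((α / (α - 1) * Real.log (retr (ρ * T))
          - Real.log (retr (σ * Matrix.rpowH T (α / (α - 1)))) : ℝ) : EReal) := by
  have hρ0 : ρ ≠ 0 := by
    rintro rfl
    simp at hρtr
  exact measured_renyi_variational_lt_one_general hρ hσ
    (mul_ne_zero_of_forall_mulVec_eq_zero hρ.1 hσ.1 hρ0 hsupp) hα0 hα1

end
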